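/- For each fixed r ≥ 0, the number X_{n,r} of r-dimensional subcubes contained in a uniformly random subset of {0,1}^n satisfies a central limit theorem: (X_{n,r} − E[X_{n,r}]) / sqrt(Var(X_{n,r})) converges in distribution to the standard normal distribution N(0,1) as n → ∞. -/

import Mathlib

/-!
Write `p = 2 ^ (-2 ^ r)`, `m = n.choose r`, `N = 2 ^ n`, and let `k(w, w')` be the number of common
points of the cubes `w` and `w'`. Since a set of `a` points lies in `S` with probability `2 ^ (-a)`,
`Var X = p² ∑ (2 ^ k(w, w') - 1)`, the sum being over ordered pairs of `r`-cubes (`varXr_eq`).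

The part of `X - E X` that is linear in the indicators of the points is `p m (2 |S| - N)`,
because every point lies on exactly `m` cubes. Its variance is
`p² m² N = p² ∑ k(w, w')` (`linVar`, `sum_card_inter`). Two cubes with at least two common points
share a point and a free coordinate, and such pairs are rare: among the cubes through a point only
the proportion `r / n` has a given coordinate free. Hence `p² m² N ≤ Var X ≤ p² m² N (1 + O(1 / n))`
(`linVar_le_varXr`, `varXr_le`): the linear part carries asymptotically all of the variance.

Consequently the standardized `X` is close in `L²` to the standardized cardinality of `S`
(`expect_sq_sub`), so the two characteristic functions have the same limit
(`norm_integral_exp_sub_le`). The second one is `cos (t / √N) ^ N`, which tends to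
`exp (-t ^ 2 / 2)` (`tendsto_cos_pow`), and Lévy's continuity theorem concludes.
-/

open Finset MeasureTheory ProbabilityTheory

def cube {n : ℕ} (w : Fin n → Option Bool) : Finset (Fin n → Bool) :=
  Finset.univ.filter fun x => ∀ i, ∀ b, w i = some b → x i = b

def Word (n r : ℕ) : Finset (Fin n → Option Bool) :=
  Finset.univ.filter fun w => (Finset.univ.filter fun i => w i = none).card = r

def Xr (n r : ℕ) (S : Finset (Fin n → Bool)) : ℕ :=
  ((Word n r).filter fun w => cube w ⊆ S).card

instance (n : ℕ) : MeasurableSpace (Finset (Fin n → Bool)) := ⊤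

/-- The uniform probability measure on the subsets of `{0,1}^n`. -/
noncomputable def unifPM (n : ℕ) : ProbabilityMeasure (Finset (Fin n → Bool)) :=
  ⟨(PMF.uniformOfFintype (Finset (Fin n → Bool))).toMeasure, inferInstance⟩

noncomputable def meanXr (n r : ℕ) : ℝ := ∫ S, (Xr n r S : ℝ) ∂(unifPM n : Measure _)

noncomputable def varXr (n r : ℕ) : ℝ :=
  ∫ S, ((Xr n r S : ℝ) - meanXr n r) ^ 2 ∂(unifPM n : Measure _)

open scoped BigOperators

/-! ### Moments of a uniformly random set -/

lemma integral_unifPM {E : Type*} [NormedAddCommGroup E] [NormedSpace ℝ E] [CompleteSpace E]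
    (n : ℕ) (f : Finset (Fin n → Bool) → E) :
    ∫ S, f S ∂(unifPM n : Measure _) = ((2 : ℝ) ^ (2 ^ n))⁻¹ • ∑ S, f S := by
  change ∫ S, f S ∂((PMF.uniformOfFintype (Finset (Fin n → Bool))).toMeasure) = _
  rw [PMF.integral_eq_sum]
  simp [Finset.smul_sum]

lemma integral_unifPM_real (n : ℕ) (f : Finset (Fin n → Bool) → ℝ) :
    ∫ S, f S ∂(unifPM n : Measure _) = 𝔼 S, f S := by
  rw [integral_unifPM, Fintype.expect_eq_sum_div_card]
  simp [div_eq_inv_mul]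

/-- The indicator of the event `A ⊆ S`. -/
noncomputable def ind {α : Type*} [DecidableEq α] (A S : Finset α) : ℝ := if A ⊆ S then 1 else 0

lemma ind_mul_ind {α : Type*} [DecidableEq α] (A B S : Finset α) :
    ind A S * ind B S = ind (A ∪ B) S := by
  simp only [ind, Finset.union_subset_iff]
  split_ifs <;> simp_all

lemma expect_ind {α : Type*} [Fintype α] [DecidableEq α] (A : Finset α) :
    𝔼 S, ind A S = ((2 : ℝ) ^ A.card)⁻¹ := by
  rw [Fintype.expect_eq_sum_div_card]
  have h : ∑ S, ind A S = (Finset.Icc A Finset.univ).card := by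
    simp only [ind, Finset.sum_boole]
    congr 2
    ext S
    simp
  have hA : A.card ≤ Fintype.card α := Finset.card_le_univ A
  rw [h, Finset.card_Icc_finset (Finset.subset_univ A), Finset.card_univ, Fintype.card_finset]
  push_cast
  rw [pow_sub₀ _ (by norm_num) hA]
  field_simp

lemma card_eq_sum_ind {α : Type*} [Fintype α] [DecidableEq α] (S : Finset α) :
    (S.card : ℝ) = ∑ x, ind {x} S := by
  simp [ind]

/-- `2 * |S| - |α|` is the sum over the points of the signs recording membership in `S`; only the
points of `A` contribute to its correlation with the event `A ⊆ S`. -/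
lemma expect_ind_mul_walk {α : Type*} [Fintype α] [DecidableEq α] (A : Finset α) :
    𝔼 S, ind A S * (2 * (S.card : ℝ) - Fintype.card α) = ((2 : ℝ) ^ A.card)⁻¹ * A.card := by
  have h1 : ∀ S : Finset α, ind A S * (2 * (S.card : ℝ) - Fintype.card α)
      = 2 * (∑ x, ind (A ∪ {x}) S) - Fintype.card α * ind A S := by
    intro S
    rw [card_eq_sum_ind]
    simp_rw [← ind_mul_ind]
    rw [← Finset.mul_sum]
    ring
  simp_rw [h1]
  rw [Finset.expect_sub_distrib, ← Finset.mul_expect, ← Finset.mul_expect, Finset.expect_sum_comm]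
  simp_rw [expect_ind]
  have h2 : ∀ x, ((2 : ℝ) ^ (A ∪ {x}).card)⁻¹
      = ((2 : ℝ) ^ A.card)⁻¹ * ((if x ∈ A then 1 / 2 else 0) + 1 / 2) := by
    intro x
    split_ifs with h
    · rw [Finset.union_eq_left.2 (by simpa using h)]; ring
    · rw [Finset.card_union_of_disjoint (by simpa using h)]
      simp [pow_succ]
      ring
  simp_rw [h2]
  rw [← Finset.mul_sum, Finset.sum_add_distrib]
  simp
  ring

lemma expect_walk {α : Type*} [Fintype α] [DecidableEq α] :
    𝔼 S : Finset α, (2 * (S.card : ℝ) - Fintype.card α) = 0 := by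
  simpa [ind] using expect_ind_mul_walk (∅ : Finset α)

lemma expect_walk_sq {α : Type*} [Fintype α] [DecidableEq α] :
    𝔼 S : Finset α, (2 * (S.card : ℝ) - Fintype.card α) ^ 2 = (Fintype.card α : ℝ) := by
  have h1 : ∀ S : Finset α, (2 * (S.card : ℝ) - Fintype.card α) ^ 2
      = 2 * (∑ x, ind {x} S * (2 * (S.card : ℝ) - Fintype.card α))
        - Fintype.card α * (2 * (S.card : ℝ) - Fintype.card α) := by
    intro S
    rw [← Finset.sum_mul, ← card_eq_sum_ind]
    ring
  simp_rw [h1]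
  rw [Finset.expect_sub_distrib, ← Finset.mul_expect, ← Finset.mul_expect, Finset.expect_sum_comm,
    expect_walk]
  simp_rw [expect_ind_mul_walk]
  simp
  ring

/-! ### Counting cubes -/

/-- The free coordinates of a word. -/
def freeSet {n : ℕ} (w : Fin n → Option Bool) : Finset (Fin n) :=
  Finset.univ.filter fun i => w i = none

lemma mem_freeSet {n : ℕ} (w : Fin n → Option Bool) (i : Fin n) :
    i ∈ freeSet w ↔ w i = none := by
  simp [freeSet]

lemma mem_Word {n r : ℕ} (w : Fin n → Option Bool) : w ∈ Word n r ↔ (freeSet w).card = r := by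
  simp [Word, freeSet]

lemma mem_cube {n : ℕ} (w : Fin n → Option Bool) (x : Fin n → Bool) :
    x ∈ cube w ↔ ∀ i b, w i = some b → x i = b := by
  simp [cube]

lemma card_cube {n r : ℕ} {w : Fin n → Option Bool} (hw : w ∈ Word n r) :
    (cube w).card = 2 ^ r := by
  have h : cube w = Fintype.piFinset
      (fun i => if w i = none then Finset.univ else Finset.univ.filter fun b => w i = some b) := by
    ext x
    rw [mem_cube, Fintype.mem_piFinset]
    refine forall_congr' fun i => ?_
    cases hi : w i with
    | none => simp
    | some b => cases b <;> cases x i <;> simp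
  have h2 : ∀ i, (if w i = none then (Finset.univ : Finset Bool)
      else Finset.univ.filter fun b => w i = some b).card = if w i = none then 2 else 1 := by
    intro i
    cases hi : w i with
    | none => simp
    | some b => cases b <;> rfl
  rw [h, Fintype.card_piFinset]
  simp_rw [h2]
  rw [Finset.prod_ite]
  simp only [Finset.prod_const, one_pow, mul_one]
  congr 1
  simpa [freeSet] using (mem_Word w).1 hw

/-- A word whose cube passes through `x` is determined by its set of free coordinates, which can be
any `r`-element set. -/
lemma card_words_through {n r : ℕ} (x : Fin n → Bool) (P : Finset (Fin n) → Prop)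
    [DecidablePred P] :
    ((Word n r).filter fun w => x ∈ cube w ∧ P (freeSet w)).card
      = ((Finset.univ.powersetCard r).filter P).card := by
  refine Finset.card_nbij' freeSet (fun F i => if i ∈ F then none else some (x i)) ?_ ?_ ?_ ?_
  · intro w hw
    simp only [Finset.coe_filter, Set.mem_ofPred_eq, mem_Word] at hw
    simp [Finset.mem_powersetCard, hw.1, hw.2.2]
  · intro F hF
    have hf : freeSet (fun i => if i ∈ F then none else some (x i)) = F := by
      ext i; simp [mem_freeSet]
    simp only [Finset.coe_filter, Set.mem_ofPred_eq, Finset.mem_powersetCard] at hF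
    simp only [Finset.coe_filter, Set.mem_ofPred_eq, mem_Word, hf, mem_cube]
    refine ⟨hF.1.2, ?_, hF.2⟩
    intro i b hb
    split_ifs at hb
    simpa using hb
  · intro w hw
    simp only [Finset.coe_filter, Set.mem_ofPred_eq, mem_cube] at hw
    funext i
    cases hi : w i with
    | none => simp [mem_freeSet, hi]
    | some b => simp [mem_freeSet, hi, hw.2.1 i b hi]
  · intro F hF
    ext i; simp [mem_freeSet]

/-- Each point lies on `n.choose r` cubes of dimension `r`. -/
lemma card_words_through_point {n r : ℕ} (x : Fin n → Bool) :
    ((Word n r).filter fun w => x ∈ cube w).card = n.choose r := by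
  simpa using card_words_through (r := r) x (fun _ => True)

/-- Among the cubes through a point, the proportion `r / n` has a prescribed coordinate free. -/
lemma card_words_through_free {n r : ℕ} (hn : 0 < n) (x : Fin n → Bool) (i : Fin n) :
    (((Word n r).filter fun w => x ∈ cube w ∧ i ∈ freeSet w).card : ℝ)
      = n.choose r * r / n := by
  rw [card_words_through x (fun F => i ∈ F)]
  obtain ⟨k, rfl⟩ : ∃ k, n = k + 1 := ⟨n - 1, by omega⟩
  have h1 := Finset.card_filter_add_card_filter_not (s := (Finset.univ : Finset (Fin (k + 1))).powersetCard r)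
    (fun F => i ∈ F)
  -- The `r`-sets avoiding `i` are counted by `k.choose r`; those containing `i` are the others.
  have h2 : ((Finset.univ : Finset (Fin (k + 1))).powersetCard r).filter (fun F => ¬ i ∈ F)
      = (Finset.univ.erase i).powersetCard r := by
    ext F
    simp only [Finset.mem_filter, Finset.mem_powersetCard, Finset.subset_erase]
    tauto
  rw [h2, Finset.card_powersetCard, Finset.card_powersetCard, Finset.card_erase_of_mem (by simp),
    Finset.card_univ, Fintype.card_fin, Nat.add_sub_cancel] at h1
  have h3 := Nat.choose_mul_succ_eq k r
  rcases le_or_gt r (k + 1) with hr | hr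
  · have h1' : ((((Finset.univ : Finset (Fin (k + 1))).powersetCard r).filter
      (fun F => i ∈ F)).card : ℝ) + k.choose r = (k + 1).choose r := by exact_mod_cast h1
    have h3' : (k.choose r : ℝ) * (k + 1) = (k + 1).choose r * (k + 1 - r) := by
      have := congrArg (Nat.cast (R := ℝ)) h3
      push_cast [Nat.cast_sub hr] at this
      exact this
    have : (0 : ℝ) < k + 1 := by positivity
    push_cast
    rw [eq_div_iff this.ne']
    linear_combination ((k : ℝ) + 1) * h1' - h3'
  · have h4 : (k + 1).choose r = 0 := Nat.choose_eq_zero_of_lt hr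
    rw [h4] at h1 ⊢
    have : (((Finset.univ : Finset (Fin (k + 1))).powersetCard r).filter
      (fun F => i ∈ F)).card = 0 := by omega
    rw [this]
    simp

lemma card_inter_eq_sum {n : ℕ} (w w' : Fin n → Option Bool) :
    ((cube w ∩ cube w').card : ℝ)
      = ∑ x, (if x ∈ cube w then (1 : ℝ) else 0) * (if x ∈ cube w' then 1 else 0) := by
  simp only [← ite_and, mul_ite, mul_one, mul_zero, Finset.sum_boole]
  congr 2
  ext x
  simp [and_comm]

lemma sum_sum_sum_mul {α β : Type*} [Fintype β] (s : Finset α) (f : α → β → ℝ) :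
    ∑ w ∈ s, ∑ w' ∈ s, ∑ x, f w x * f w' x = ∑ x, (∑ w ∈ s, f w x) ^ 2 := by
  simp_rw [sq, Finset.sum_mul_sum]
  rw [Finset.sum_comm (s := Finset.univ)]
  exact Finset.sum_congr rfl fun w _ => Finset.sum_comm

/-- Double counting of the incidences `x ∈ cube w ∩ cube w'`. -/
lemma sum_card_inter (n r : ℕ) :
    ∑ w ∈ Word n r, ∑ w' ∈ Word n r, ((cube w ∩ cube w').card : ℝ)
      = 2 ^ n * (n.choose r : ℝ) ^ 2 := by
  simp_rw [card_inter_eq_sum]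
  have h : ∀ x : Fin n → Bool, ∑ w ∈ Word n r, (if x ∈ cube w then (1 : ℝ) else 0)
      = n.choose r := by
    intro x
    rw [Finset.sum_boole, card_words_through_point]
  rw [sum_sum_sum_mul]
  simp [h]

/-- Double counting of the incidences `x ∈ cube w`. -/
lemma card_Word (n r : ℕ) : ((Word n r).card : ℝ) * 2 ^ r = 2 ^ n * n.choose r := by
  have h1 : ∑ w ∈ Word n r, (cube w).card = ∑ x : Fin n → Bool, n.choose r := by
    rw [Finset.sum_congr rfl fun x _ => (card_words_through_point (r := r) x).symm]
    have := Finset.sum_card_bipartiteAbove_eq_sum_card_bipartiteBelow (s := Word n r)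
      (t := (Finset.univ : Finset (Fin n → Bool))) (fun w x => x ∈ cube w)
    simpa [Finset.bipartiteAbove, Finset.bipartiteBelow] using this
  rw [Finset.sum_congr rfl fun w hw => card_cube hw] at h1
  simp at h1
  exact_mod_cast h1

/-- Two cubes sharing at least two points share a free coordinate, so the excess over the
linear term is controlled by pairs of cubes with a common point and a common free coordinate. -/
lemma excess_le {n r : ℕ} {w w' : Fin n → Option Bool} (hw : w ∈ Word n r) :
    (2 : ℝ) ^ (cube w ∩ cube w').card - 1 - (cube w ∩ cube w').card
      ≤ 2 ^ 2 ^ r * ∑ p : (Fin n → Bool) × Fin n,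
        (if p.1 ∈ cube w ∧ p.2 ∈ freeSet w then (1 : ℝ) else 0)
          * (if p.1 ∈ cube w' ∧ p.2 ∈ freeSet w' then 1 else 0) := by
  have hnn : 0 ≤ ∑ p : (Fin n → Bool) × Fin n,
        (if p.1 ∈ cube w ∧ p.2 ∈ freeSet w then (1 : ℝ) else 0)
          * (if p.1 ∈ cube w' ∧ p.2 ∈ freeSet w' then 1 else 0) :=
    Finset.sum_nonneg fun p _ => by positivity
  rcases lt_or_ge 1 (cube w ∩ cube w').card with h | h
  · obtain ⟨x, hx, y, hy, hxy⟩ := Finset.one_lt_card.1 h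
    rw [Finset.mem_inter] at hx hy
    obtain ⟨i, hi⟩ := Function.ne_iff.1 hxy
    have key : ∀ v : Fin n → Option Bool, x ∈ cube v → y ∈ cube v → i ∈ freeSet v := by
      intro v h1 h2
      rw [mem_cube] at h1 h2
      rw [mem_freeSet]
      cases hv : v i with
      | none => rfl
      | some b => exact absurd ((h1 i b hv).trans (h2 i b hv).symm) hi
    have h1 : 1 ≤ ∑ p : (Fin n → Bool) × Fin n,
        (if p.1 ∈ cube w ∧ p.2 ∈ freeSet w then (1 : ℝ) else 0)
          * (if p.1 ∈ cube w' ∧ p.2 ∈ freeSet w' then 1 else 0) := by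
      refine le_trans ?_ (Finset.single_le_sum (fun p _ => by positivity)
        (Finset.mem_univ (x, i)))
      simp [hx.1, hx.2, key w hx.1 hy.1, key w' hx.2 hy.2]
    have h2 : (2 : ℝ) ^ (cube w ∩ cube w').card ≤ 2 ^ 2 ^ r := by
      apply pow_le_pow_right₀ (by norm_num)
      rw [← card_cube hw]
      exact Finset.card_le_card Finset.inter_subset_left
    have h3 : (0 : ℝ) ≤ (cube w ∩ cube w').card := by positivity
    nlinarith [pow_pos (show (0 : ℝ) < 2 by norm_num) (2 ^ r)]
  · refine le_trans (le_of_eq ?_) (mul_nonneg (by positivity) hnn)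
    interval_cases hc : (cube w ∩ cube w').card <;> norm_num

lemma sum_excess_le {n r : ℕ} (hn : 0 < n) :
    ∑ w ∈ Word n r, ∑ w' ∈ Word n r,
      ((2 : ℝ) ^ (cube w ∩ cube w').card - 1 - (cube w ∩ cube w').card)
      ≤ 2 ^ 2 ^ r * (2 ^ n * ((n.choose r : ℝ) ^ 2 * (r ^ 2 / n))) := by
  refine (Finset.sum_le_sum fun w hw => Finset.sum_le_sum fun w' _ =>
    excess_le hw).trans (le_of_eq ?_)
  simp_rw [← Finset.mul_sum]
  congr 1
  have h : ∀ (x : Fin n → Bool) i, ∑ w ∈ Word n r,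
      (if x ∈ cube w ∧ i ∈ freeSet w then (1 : ℝ) else 0) = n.choose r * r / n := by
    intro x i
    rw [Finset.sum_boole, card_words_through_free hn]
  rw [sum_sum_sum_mul]
  rw [Finset.sum_congr rfl fun p _ => by rw [h p.1 p.2]]
  simp
  field_simp

/-! ### The variance and its linear part -/

lemma Xr_eq_sum (n r : ℕ) (S : Finset (Fin n → Bool)) :
    (Xr n r S : ℝ) = ∑ w ∈ Word n r, ind (cube w) S := by
  simp [Xr, ind]

lemma meanXr_eq (n r : ℕ) : meanXr n r = (Word n r).card * ((2 : ℝ) ^ 2 ^ r)⁻¹ := by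
  rw [meanXr, integral_unifPM_real]
  simp_rw [Xr_eq_sum]
  rw [Finset.expect_sum_comm]
  simp_rw [expect_ind]
  rw [Finset.sum_congr rfl fun w hw => by rw [card_cube hw]]
  simp

lemma expect_Xr_sub_mean (n r : ℕ) : 𝔼 S, ((Xr n r S : ℝ) - meanXr n r) = 0 := by
  rw [Finset.expect_sub_distrib, ← integral_unifPM_real, ← meanXr]
  simp

lemma varXr_eq (n r : ℕ) :
    varXr n r = (((2 : ℝ) ^ 2 ^ r)⁻¹) ^ 2 *
      ∑ w ∈ Word n r, ∑ w' ∈ Word n r, ((2 : ℝ) ^ (cube w ∩ cube w').card - 1) := by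
  have h : ∀ S, ((Xr n r S : ℝ) - meanXr n r) ^ 2 =
      (∑ w ∈ Word n r, ∑ w' ∈ Word n r, ind (cube w ∪ cube w') S) - meanXr n r ^ 2
        - 2 * meanXr n r * ((Xr n r S : ℝ) - meanXr n r) := by
    intro S
    simp_rw [← ind_mul_ind]
    rw [← Finset.sum_mul_sum, ← Xr_eq_sum]
    ring
  rw [varXr, integral_unifPM_real]
  simp_rw [h]
  rw [Finset.expect_sub_distrib, Finset.expect_sub_distrib, ← Finset.mul_expect,
    expect_Xr_sub_mean, Finset.expect_sum_comm]
  simp_rw [Finset.expect_sum_comm, expect_ind]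
  have h2 : ∀ w ∈ Word n r, ∀ w' ∈ Word n r, ((2 : ℝ) ^ (cube w ∪ cube w').card)⁻¹
      = (((2 : ℝ) ^ 2 ^ r)⁻¹) ^ 2 * 2 ^ (cube w ∩ cube w').card := by
    intro w hw w' hw'
    have := Finset.card_union_add_card_inter (cube w) (cube w')
    rw [card_cube hw, card_cube hw'] at this
    have h3 := congrArg (fun k => (2 : ℝ) ^ k) this
    simp only [pow_add] at h3
    field_simp
    linear_combination -h3
  rw [Finset.sum_congr rfl fun w hw => Finset.sum_congr rfl fun w' hw' => h2 w hw w' hw']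
  simp_rw [← Finset.mul_sum, Finset.sum_sub_distrib]
  rw [meanXr_eq]
  simp
  ring

/-- The covariance of `X_{n,r}` with the linear statistic `2 * |S| - 2 ^ n`. -/
lemma expect_Xr_mul_walk (n r : ℕ) :
    𝔼 S : Finset (Fin n → Bool), ((Xr n r S : ℝ) - meanXr n r) * (2 * (S.card : ℝ) - 2 ^ n)
      = 2 ^ n * n.choose r * ((2 : ℝ) ^ 2 ^ r)⁻¹ := by
  have hN : (Fintype.card (Fin n → Bool) : ℝ) = 2 ^ n := by simp
  have h0 := expect_walk (α := Fin n → Bool)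
  have h1 := fun A => expect_ind_mul_walk (α := Fin n → Bool) A
  rw [hN] at h0
  simp only [hN] at h1
  simp_rw [sub_mul (Xr n r _ : ℝ)]
  rw [Finset.expect_sub_distrib, ← Finset.mul_expect, h0]
  simp_rw [Xr_eq_sum, Finset.sum_mul]
  rw [Finset.expect_sum_comm]
  simp_rw [h1]
  rw [Finset.sum_congr rfl fun w hw => by rw [card_cube hw]]
  rw [← card_Word]
  simp
  ring

/-- The variance of the orthogonal projection of `X_{n,r}` onto the affine functions of the
indicators of the events `x ∈ S`. -/
noncomputable def linVar (n r : ℕ) : ℝ :=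
  (((2 : ℝ) ^ 2 ^ r)⁻¹) ^ 2 * (2 ^ n * (n.choose r : ℝ) ^ 2)

lemma linVar_le_varXr (n r : ℕ) : linVar n r ≤ varXr n r := by
  rw [linVar, varXr_eq, ← sum_card_inter]
  gcongr with w _ v _
  -- Termwise, `k ≤ 2 ^ k - 1`.
  have := one_add_mul_le_pow (show (-2 : ℝ) ≤ 1 by norm_num) (cube w ∩ cube v).card
  norm_num at this
  linarith

lemma varXr_le {n r : ℕ} (hn : 0 < n) :
    varXr n r ≤ linVar n r * (1 + 2 ^ 2 ^ r * r ^ 2 / n) := by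
  have h := sum_excess_le (r := r) hn
  simp_rw [Finset.sum_sub_distrib (f := fun w' => (2 : ℝ) ^ (cube _ ∩ cube w').card - 1)] at h
  rw [Finset.sum_sub_distrib, sum_card_inter] at h
  calc varXr n r ≤ (((2 : ℝ) ^ 2 ^ r)⁻¹) ^ 2 * (2 ^ n * (n.choose r : ℝ) ^ 2
        + 2 ^ 2 ^ r * (2 ^ n * ((n.choose r : ℝ) ^ 2 * (r ^ 2 / n)))) := by
        rw [varXr_eq]
        gcongr
        linarith
    _ = _ := by rw [linVar]; ring

lemma linVar_pos {n r : ℕ} (h : r ≤ n) : 0 < linVar n r := by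
  have : 0 < n.choose r := Nat.choose_pos h
  unfold linVar
  positivity

lemma tendsto_linVar_div_varXr (r : ℕ) :
    Filter.Tendsto (fun n => linVar n r / varXr n r) Filter.atTop (nhds 1) := by
  have h : Filter.Tendsto (fun n : ℕ => (1 + (2 : ℝ) ^ 2 ^ r * r ^ 2 / n)⁻¹) Filter.atTop
      (nhds 1) := by
    simpa using ((tendsto_const_div_atTop_nhds_zero_nat ((2 : ℝ) ^ 2 ^ r * r ^ 2)).const_add 1).inv₀
      (by norm_num)
  refine tendsto_of_tendsto_of_tendsto_of_le_of_le' h tendsto_const_nhds ?_ ?_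
  · filter_upwards [Filter.eventually_ge_atTop r, Filter.eventually_gt_atTop 0] with n hr hn
    have h1 := linVar_pos hr
    have h2 := h1.trans_le (linVar_le_varXr n r)
    rw [inv_eq_one_div, div_le_div_iff₀ (by positivity) h2]
    linarith [varXr_le (r := r) hn]
  · filter_upwards [Filter.eventually_ge_atTop r] with n hr
    have h2 := (linVar_pos hr).trans_le (linVar_le_varXr n r)
    exact (div_le_one h2).2 (linVar_le_varXr n r)

/-- The standardized number of points of `S`, a normalized sum of `2 ^ n` independent signs. -/
noncomputable def stdCard (n : ℕ) (S : Finset (Fin n → Bool)) : ℝ :=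
  (2 * (S.card : ℝ) - 2 ^ n) / √(2 ^ n)

/-- The `L²` distance between the standardized subcube count and the standardized cardinality. -/
lemma expect_sq_sub {n r : ℕ} (h : r ≤ n) :
    𝔼 S, (((Xr n r S : ℝ) - meanXr n r) / √(varXr n r) - stdCard n S) ^ 2
      = 2 - 2 * √(linVar n r / varXr n r) := by
  have h1 := linVar_pos h
  have h2 := h1.trans_le (linVar_le_varXr n r)
  have hN : (0 : ℝ) < 2 ^ n := by positivity
  have e1 : ∀ S : Finset (Fin n → Bool),
      (((Xr n r S : ℝ) - meanXr n r) / √(varXr n r) - stdCard n S) ^ 2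
      = ((Xr n r S : ℝ) - meanXr n r) ^ 2 / varXr n r + (2 * (S.card : ℝ) - 2 ^ n) ^ 2 / 2 ^ n
        - ((Xr n r S : ℝ) - meanXr n r) * (2 * (S.card : ℝ) - 2 ^ n)
          * (2 / (√(varXr n r) * √(2 ^ n))) := by
    intro S
    rw [stdCard, sub_sq, div_pow, div_pow, Real.sq_sqrt h2.le, Real.sq_sqrt hN.le]
    ring
  have e2 := expect_walk_sq (α := Fin n → Bool)
  have hc : (Fintype.card (Fin n → Bool) : ℝ) = 2 ^ n := by simp
  rw [hc] at e2
  simp_rw [e1]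
  rw [Finset.expect_sub_distrib, Finset.expect_add_distrib, ← Finset.expect_div,
    ← Finset.expect_div, ← Finset.expect_mul, expect_Xr_mul_walk, e2, ← integral_unifPM_real,
    ← varXr, div_self h2.ne', div_self hN.ne', Real.sqrt_div h1.le, linVar,
    Real.sqrt_mul (by positivity), Real.sqrt_mul (by positivity), Real.sqrt_sq (by positivity),
    Real.sqrt_sq (by positivity)]
  have h3 : √(varXr n r) ≠ 0 := (Real.sqrt_pos.2 h2).ne'
  have h4 : √((2 : ℝ) ^ n) ≠ 0 := (Real.sqrt_pos.2 hN).ne'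
  have h5 : √((2 : ℝ) ^ n) * √((2 : ℝ) ^ n) = 2 ^ n := Real.mul_self_sqrt hN.le
  field_simp
  linear_combination 2 * (n.choose r : ℝ) * h5

lemma expect_abs_sub_le {n r : ℕ} (h : r ≤ n) :
    𝔼 S, |((Xr n r S : ℝ) - meanXr n r) / √(varXr n r) - stdCard n S|
      ≤ √(2 - 2 * √(linVar n r / varXr n r)) := by
  apply Real.le_sqrt_of_sq_le
  have := Finset.expect_mul_sq_le_sq_mul_sq Finset.univ
    (fun S : Finset (Fin n → Bool) =>
      |((Xr n r S : ℝ) - meanXr n r) / √(varXr n r) - stdCard n S|) (fun _ => 1)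
  simpa [expect_sq_sub h] using this

/-! ### Characteristic functions -/

lemma charFun_map_unifPM {n : ℕ} (f : Finset (Fin n → Bool) → ℝ)
    (hf : AEMeasurable f (unifPM n : Measure _)) (t : ℝ) :
    charFun ((unifPM n).map hf : Measure ℝ) t
      = ∫ S, Complex.exp (Complex.I * (t * f S : ℝ)) ∂(unifPM n : Measure _) := by
  rw [charFun_apply_real, ProbabilityMeasure.toMeasure_map, integral_map hf (by fun_prop)]
  congr 1
  funext S
  push_cast
  ring_nf

/-- The characteristic function factors over the points, each contributing a fair sign scaled by
`1 / √(2 ^ n)`. -/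
lemma integral_exp_stdCard (n : ℕ) (t : ℝ) :
    ∫ S, Complex.exp (Complex.I * (t * stdCard n S : ℝ)) ∂(unifPM n : Measure _)
      = ((Real.cos (t / √((2 ^ n : ℕ) : ℝ)) ^ (2 ^ n) : ℝ) : ℂ) := by
  rw [integral_unifPM]
  set a : ℂ := ((t / √((2 ^ n : ℕ) : ℝ) : ℝ) : ℂ) with ha
  have h : ∀ S : Finset (Fin n → Bool), Complex.exp (Complex.I * (t * stdCard n S : ℝ))
      = (∏ _x ∈ S, Complex.exp (a * Complex.I)) * ∏ _x ∈ Sᶜ, Complex.exp (-a * Complex.I) := by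
    intro S
    have hc : (Sᶜ.card : ℂ) = 2 ^ n - S.card := by
      have := Finset.card_add_card_compl S
      have h2 := congrArg (Nat.cast (R := ℂ)) this
      simp only [Fintype.card_pi, Fintype.card_bool, Finset.prod_const, Finset.card_univ,
        Fintype.card_fin] at h2
      push_cast at h2
      linear_combination h2
    rw [Finset.prod_const, Finset.prod_const, ← Complex.exp_nat_mul, ← Complex.exp_nat_mul,
      ← Complex.exp_add, hc, ha, stdCard]
    congr 1
    push_cast
    ring
  simp_rw [h]
  rw [← Fintype.prod_add]
  have h2 : Complex.exp (a * Complex.I) + Complex.exp (-a * Complex.I) = 2 * Complex.cos a := by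
    rw [Complex.cos]; ring
  rw [h2]
  simp [mul_pow, ha]

lemma tendsto_cos_pow (t : ℝ) :
    Filter.Tendsto (fun N : ℕ => Real.cos (t / √(N : ℝ)) ^ N) Filter.atTop
      (nhds (Real.exp (-(t ^ 2 / 2)))) := by
  have h0 : Filter.Tendsto (fun N : ℕ => t / √(N : ℝ) / 2) Filter.atTop (nhds 0) := by
    have := (tendsto_const_nhds (x := t)).div_atTop
      (Real.tendsto_sqrt_atTop.comp tendsto_natCast_atTop_atTop)
    simpa using this.div_const 2
  have h1 := (Real.continuous_sinc.tendsto 0).comp h0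
  have h2 : Filter.Tendsto (fun N : ℕ => (N : ℝ) * (Real.cos (t / √(N : ℝ)) - 1)) Filter.atTop
      (nhds (-(t ^ 2 / 2))) := by
    -- `N (cos (t / √N) - 1) = -(t² / 2) sinc² (t / (2 √N))`, from `cos (2 x) - 1 = -2 sin² x`.
    have h3 := (h1.pow 2).const_mul (-(t ^ 2 / 2))
    rw [Real.sinc_zero, one_pow, mul_one] at h3
    refine h3.congr' ?_
    filter_upwards [Filter.eventually_gt_atTop 0] with N hN
    have hN' : (0 : ℝ) < N := by exact_mod_cast hN
    have hs : √(N : ℝ) ^ 2 = N := Real.sq_sqrt hN'.le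
    have hs0 : √(N : ℝ) ≠ 0 := (Real.sqrt_pos.2 hN').ne'
    set x := t / √(N : ℝ) / 2 with hx
    have h4 : Real.cos (t / √(N : ℝ)) - 1 = -2 * Real.sin x ^ 2 := by
      rw [show t / √(N : ℝ) = 2 * x by rw [hx]; ring, Real.cos_two_mul, Real.cos_sq']
      ring
    have h5 : t ^ 2 = 4 * N * x ^ 2 := by
      rw [hx, div_pow, div_pow, hs]
      field_simp
      norm_num
    have h6 : x * Real.sinc x = Real.sin x := by
      rcases eq_or_ne x 0 with h | h
      · simp [h]
      · rw [Real.sinc_of_ne_zero h]; field_simp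
    simp only [Function.comp]
    rw [h4, h5, ← h6]
    ring
  simpa using Real.tendsto_one_add_pow_exp_of_tendsto h2

lemma norm_exp_sub_exp_le (a b : ℝ) :
    ‖Complex.exp (Complex.I * a) - Complex.exp (Complex.I * b)‖ ≤ |a - b| := by
  have h : Complex.exp (Complex.I * a) - Complex.exp (Complex.I * b)
      = Complex.exp (Complex.I * b) * (Complex.exp (Complex.I * (a - b : ℝ)) - 1) := by
    rw [mul_sub, ← Complex.exp_add, mul_one]
    congr 2
    push_cast
    ring
  rw [h, norm_mul, Complex.norm_exp_I_mul_ofReal, one_mul]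
  exact Real.norm_exp_I_mul_ofReal_sub_one_le

/-- Characteristic functions are Lipschitz for the `L¹` distance of random variables. -/
lemma norm_integral_exp_sub_le {n : ℕ} (f g : Finset (Fin n → Bool) → ℝ) (t : ℝ) :
    ‖∫ S, Complex.exp (Complex.I * (t * f S : ℝ)) ∂(unifPM n : Measure _)
      - ∫ S, Complex.exp (Complex.I * (t * g S : ℝ)) ∂(unifPM n : Measure _)‖
      ≤ |t| * 𝔼 S, |f S - g S| := by
  rw [← integral_sub .of_finite .of_finite, ← integral_unifPM_real, ← integral_const_mul]
  refine norm_integral_le_of_norm_le .of_finite (Filter.Eventually.of_forall fun S => ?_)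
  rw [← abs_mul, mul_sub]
  exact norm_exp_sub_exp_le _ _

/-- Central limit theorem for the number of `r`-dimensional subcubes contained
in a uniformly random subset of `{0,1}^n`: the standardized `X_{n,r}` converges
in distribution to `N(0,1)` as `n → ∞`. -/
theorem clt_subcubes (r : ℕ) :
    Filter.Tendsto
      (fun n => (unifPM n).map
        (f := fun S => ((Xr n r S : ℝ) - meanXr n r) / Real.sqrt (varXr n r))
        (Measurable.aemeasurable (fun s _ => trivial)))
      Filter.atTop (nhds ⟨gaussianReal 0 1, inferInstance⟩) := by
  refine ProbabilityMeasure.tendsto_iff_tendsto_charFun.2 fun t => ?_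
  refine Filter.Tendsto.congr (fun n => (charFun_map_unifPM _ _ t).symm) ?_
  have h1 : Filter.Tendsto (fun n => ∫ S, Complex.exp (Complex.I * (t * stdCard n S : ℝ))
      ∂(unifPM n : Measure _)) Filter.atTop (nhds (charFun (gaussianReal 0 1) t)) := by
    simp_rw [integral_exp_stdCard]
    have h2 : charFun (gaussianReal 0 1) t = ((Real.exp (-(t ^ 2 / 2)) : ℝ) : ℂ) := by
      rw [charFun_gaussianReal]
      push_cast
      congr 1
      simp
    rw [h2]
    refine (Complex.continuous_ofReal.tendsto _).comp ?_
    exact (tendsto_cos_pow t).comp (tendsto_pow_atTop_atTop_of_one_lt (by norm_num : 1 < 2))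
  have h3 : Filter.Tendsto (fun n => |t| * √(2 - 2 * √(linVar n r / varXr n r))) Filter.atTop
      (nhds 0) := by
    have := (((tendsto_linVar_div_varXr r).sqrt.const_mul 2).const_sub 2).sqrt.const_mul |t|
    simpa using this
  have h4 : Filter.Tendsto (fun n =>
      ∫ S, Complex.exp (Complex.I * (t * (((Xr n r S : ℝ) - meanXr n r) / √(varXr n r)) : ℝ))
        ∂(unifPM n : Measure _)
      - ∫ S, Complex.exp (Complex.I * (t * stdCard n S : ℝ)) ∂(unifPM n : Measure _))
      Filter.atTop (nhds 0) := by
    refine squeeze_zero_norm' ?_ h3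
    filter_upwards [Filter.eventually_ge_atTop r] with n hn
    refine (norm_integral_exp_sub_le _ _ t).trans ?_
    gcongr
    exact expect_abs_sub_le hn
  simpa using h4.add h1
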